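/- Let X be a finite set with a distinguished subset of labelled singletons determining π_X. Then Π_l(X,π_X)₀ = {π ∈ Π_l(X,π_X) : λ(π) ≠ 0} consists exactly of the labelled set partitions π ∈ Π_l(X,π_X) with at most one unlabelled block, and for every π ∈ Π_l(X,π_X)₀ one has λ(π) = μ_{Π_l(X)}(π, π*), where π* is the smallest labelled set partition with at most one labelled block satisfying π* ≥ π (i.e., π* arises from π by merging all labelled blocks of π into a single labelled block). -/

import Mathlib

open scoped Classical

noncomputable section

/-! ## Labelled set partitions -/

/-- A labelled set partition of a finite set `α`: a set partition of `α` (encoded as the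
equivalence relation `rel` whose classes are the blocks) in which each block either carries
the label `l` or not (a point `x` lies in `lab` iff the block of `x` is labelled). -/
@[ext]
structure LPart (α : Type*) where
  rel : Setoid α
  lab : Set α
  lab_mem : ∀ ⦃x y : α⦄, rel x y → (x ∈ lab ↔ y ∈ lab)

namespace LPart

variable {α : Type*}

/-- `σ ≤ π` iff every block of `σ` (together with its label) is contained in a block of `π`. -/
instance : PartialOrder (LPart α) where
  le σ π := σ.rel ≤ π.rel ∧ σ.lab ⊆ π.lab
  le_refl σ := ⟨le_rfl, subset_rfl⟩
  le_trans _ _ _ h h' := ⟨h.1.trans h'.1, h.2.trans h'.2⟩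
  le_antisymm σ π h h' := LPart.ext (le_antisymm h.1 h'.1) (le_antisymm h.2 h'.2)

/-- The join (smallest common coarsening) of two labelled set partitions: the join of the
underlying partitions, a block being labelled iff it contains a labelled block of one of the
two partitions. -/
def sup (σ π : LPart α) : LPart α where
  rel := σ.rel ⊔ π.rel
  lab := {x | ∃ y, (σ.rel ⊔ π.rel) x y ∧ (y ∈ σ.lab ∨ y ∈ π.lab)}
  lab_mem := by
    intro x y h
    constructor
    · rintro ⟨z, hz, hl⟩
      exact ⟨z, (σ.rel ⊔ π.rel).iseqv.trans ((σ.rel ⊔ π.rel).iseqv.symm h) hz, hl⟩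
    · rintro ⟨z, hz, hl⟩
      exact ⟨z, (σ.rel ⊔ π.rel).iseqv.trans h hz, hl⟩

instance _root_.Setoid.finite [Finite α] : Finite (Setoid α) :=
  Finite.of_injective (fun s : Setoid α => ⇑s) fun _ _ h => Setoid.eq_iff_rel_eq.2 h

instance [Finite α] : Finite (LPart α) :=
  Finite.of_injective (fun π : LPart α => (π.rel, π.lab))
    (fun a b h => by
      cases a; cases b
      simpa [LPart.mk.injEq] using h)

instance fintype [Finite α] : Fintype (LPart α) := Fintype.ofFinite _

/-- `π` has exactly one labelled block. -/
def OneLab (π : LPart α) : Prop :=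
  π.lab.Nonempty ∧ ∀ x ∈ π.lab, ∀ y ∈ π.lab, π.rel x y

/-- The indicator `m(π)` that `π` has exactly one labelled block. -/
def m (π : LPart α) : ℝ := if π.OneLab then 1 else 0

/-- The labelled set partition `π_X` into singleton blocks, the singleton `{x}` being
labelled iff `x ∈ K`. -/
def piX (K : Set α) : LPart α :=
  ⟨⊥, K, fun x y h => by
    have : x = y := by
      have := Setoid.bot_def (α := α)
      exact congrFun (congrFun this x) y ▸ h
    rw [this]⟩

end LPart

/-- The Möbius function of a finite poset (the unique `μ` with `μ ⋆ ζ = δ`),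
evaluated at a pair of elements. -/
def mobius {P : Type*} [Fintype P] [PartialOrder P] (x y : P) : ℝ :=
  letI : LocallyFiniteOrder P := Fintype.toLocallyFiniteOrder
  IncidenceAlgebra.mu ℝ x y

/-- The state set `Π_l(X, π_X)`: all labelled set partitions `π ≥ π_X` having at least one
labelled block. -/
abbrev LStates (α : Type*) (K : Set α) : Type _ :=
  {π : LPart α // LPart.piX K ≤ π ∧ π.lab.Nonempty}

noncomputable instance {α : Type*} [Finite α] (K : Set α) : Fintype (LStates α K) :=
  Fintype.ofFinite _

/-- `λ(π) = ∑_{σ ∈ Π_l(X,π_X), σ ≥ π} μ_{Π_l(X)}(π, σ) m(σ)`. -/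
def lamda {α : Type*} [Finite α] (K : Set α) (π : LPart α) : ℝ :=
  letI : Fintype (LPart α) := LPart.fintype
  ∑ σ : LStates α K, if π ≤ σ.1 then mobius π σ.1 * LPart.m σ.1 else 0

/-- `π*`: the labelled set partition arising from `π` by merging all labelled blocks of `π`
into a single labelled block; it is the smallest labelled set partition with at most one
labelled block lying above `π`. -/
def LPart.piStar {α : Type*} (π : LPart α) : LPart α where
  rel := ⟨fun a b => π.rel a b ∨ (a ∈ π.lab ∧ b ∈ π.lab), by
    constructor
    · exact fun a => Or.inl (π.rel.iseqv.refl a)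
    · rintro a b (h | ⟨ha, hb⟩)
      · exact Or.inl (π.rel.iseqv.symm h)
      · exact Or.inr ⟨hb, ha⟩
    · rintro a b c (hab | ⟨ha, hb⟩) (hbc | ⟨hb', hc⟩)
      · exact Or.inl (π.rel.iseqv.trans hab hbc)
      · exact Or.inr ⟨(π.lab_mem hab).2 hb', hc⟩
      · exact Or.inr ⟨ha, (π.lab_mem hbc).1 hb⟩
      · exact Or.inr ⟨ha, hc⟩⟩
  lab := π.lab
  lab_mem := by
    rintro x y (h | ⟨hx, hy⟩)
    · exact π.lab_mem h
    · exact iff_of_true hx hy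

/-- `π` has at most one unlabelled block. -/
def LPart.AtMostOneUnlab {α : Type*} (π : LPart α) : Prop :=
  ∀ x y : α, x ∉ π.lab → y ∉ π.lab → π.rel x y

/-!
By Möbius inversion, the formula `λ(π) = [π has at most one unlabelled block] μ(π, π*)` amounts to
`∑ t ≥ s, [t has at most one unlabelled block] μ(t, t*) = m(s)` for `s` with a labelled block.
Group the `t` by their set `A` of labelled points: those with a given `A` form an interval
`[v, v*]`, on which `t* = v*`, so they contribute `∑ t ∈ [v, v*], μ(t, v*) = [v = v*]`. This is `1`
exactly when `A` is the set of labelled points of `s` and `s` has only one labelled block.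

That `μ(π, π*) ≠ 0` follows from its exact value: `[π, π*]` is the partition lattice on the labelled
blocks of `π`. Sorting the functions into a `q`-element set that are constant on the blocks of `s`
by their kernel gives `q ^ |s| = ∑ t ≥ s, q (q - 1) ⋯ (q - |t| + 1)`; after inversion, comparing the
linear coefficients in `q` yields `μ(s, ⊤) = (-1) ^ (|s| - 1) (|s| - 1)!`.
-/

open IncidenceAlgebra (mu)
open scoped Nat

section Mobius

variable {P Q : Type*} [PartialOrder P] [PartialOrder Q] [LocallyFiniteOrder P]
  [DecidableEq P]

lemma mobius_eq_mu [Fintype P] (x y : P) : mobius x y = mu ℝ x y := by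
  unfold mobius
  congr!
  exact Subsingleton.elim _ _

lemma mu_orderEmbedding (𝕜 : Type*) [AddCommGroup 𝕜] [One 𝕜] [LocallyFiniteOrder Q]
    [DecidableEq Q] (f : P ↪o Q) (hf : (Set.range f).OrdConnected) (a b : P) :
    mu 𝕜 (f a) (f b) = mu 𝕜 a b := by
  induction hn : (Finset.Icc a b).card using Nat.strong_induction_on generalizing b with
  | _ n ih =>
    have map_Ico : Finset.Ico (f a) (f b) = (Finset.Ico a b).map f.toEmbedding := by
      ext y
      simp only [Finset.mem_Ico, Finset.mem_map, RelEmbedding.coe_toEmbedding]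
      constructor
      · rintro ⟨hay, hyb⟩
        obtain ⟨x, rfl⟩ := hf.out ⟨a, rfl⟩ ⟨b, rfl⟩ ⟨hay, hyb.le⟩
        exact ⟨x, ⟨f.le_iff_le.1 hay, f.lt_iff_lt.1 hyb⟩, rfl⟩
      · rintro ⟨x, ⟨hax, hxb⟩, rfl⟩
        exact ⟨f.le_iff_le.2 hax, f.lt_iff_lt.2 hxb⟩
    have mu_eq_of_mem_Ico : ∀ x ∈ Finset.Ico a b, mu 𝕜 (f a) (f x) = mu 𝕜 a x := by
      intro x hx
      obtain ⟨hax, hxb⟩ := Finset.mem_Ico.1 hx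
      exact ih _ (hn ▸ Finset.card_lt_card
        (Finset.Icc_ssubset_Icc_right (hax.trans hxb.le) le_rfl hxb)) x rfl
    rw [IncidenceAlgebra.mu_apply, IncidenceAlgebra.mu_apply, map_Ico, Finset.sum_map]
    simp only [RelEmbedding.coe_toEmbedding, f.eq_iff_eq, Finset.sum_congr rfl mu_eq_of_mem_Ico]

end Mobius

section PartitionLattice

open Polynomial

lemma coeff_one_descPochhammer_succ (R : Type*) [CommRing R] (n : ℕ) :
    (descPochhammer R (n + 1)).coeff 1 = (-1) ^ n * (n ! : R) := by
  have eval_neg_one : (n ! : R) = (-1) ^ n * (descPochhammer R n).eval (-1) := by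
    rw [← ascPochhammer_eval_neg_eq_descPochhammer, neg_neg, ascPochhammer_eval_one]
  rw [descPochhammer_succ_left, coeff_X_mul, coeff_zero_eq_eval_zero, eval_comp, eval_neg_one,
    ← mul_assoc, ← mul_pow]
  simp

variable {β γ : Type*}

lemma card_ker_eq [Finite β] [Finite γ] (s : Setoid β) :
    Nat.card {f : β → γ // Setoid.ker f = s} =
      (Nat.card γ).descFactorial (Nat.card (Quotient s)) := by
  let e : {f : β → γ // Setoid.ker f = s} ≃ (Quotient s ↪ γ) :=
    { toFun f := ⟨Quotient.lift f.1 f.2.ge,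
        (Setoid.lift_injective_iff_ker_eq_of_le f.2.ge).2 f.2⟩
      invFun g := ⟨g ∘ Quotient.mk s, Setoid.ext fun _ _ =>
        g.injective.eq_iff.trans Quotient.eq⟩
      left_inv _ := rfl
      right_inv g := by ext ⟨x⟩; rfl }
  have := Fintype.ofFinite (Quotient s)
  have := Fintype.ofFinite γ
  simp only [Nat.card_congr e, Nat.card_eq_fintype_card, Fintype.card_embedding_eq]

lemma card_le_ker [Finite β] (s : Setoid β) :
    Nat.card {f : β → γ // s ≤ Setoid.ker f} = Nat.card γ ^ Nat.card (Quotient s) := by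
  rw [Nat.card_congr (Setoid.liftEquiv s), Nat.card_fun]

variable [Finite β] [LocallyFiniteOrder (Setoid β)]

lemma sum_Ici_descFactorial_card_quotient (s : Setoid β) (q : ℕ) :
    ∑ t ∈ Finset.Ici s, q.descFactorial (Nat.card (Quotient t)) =
      q ^ Nat.card (Quotient s) := by
  have := Fintype.ofFinite β
  have card_fiber : ∀ t ∈ Finset.Ici s, q.descFactorial (Nat.card (Quotient t)) =
      (Finset.univ.filter fun f : β → Fin q => s ≤ Setoid.ker f ∧ Setoid.ker f = t).card := by
    intro t ht
    have hker (f : β → Fin q) : s ≤ Setoid.ker f ∧ Setoid.ker f = t ↔ Setoid.ker f = t :=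
      and_iff_right_of_imp fun h => h ▸ Finset.mem_Ici.1 ht
    simp only [hker, ← Fintype.card_subtype, ← Nat.card_eq_fintype_card, card_ker_eq,
      Nat.card_fin]
  have card_total : q ^ Nat.card (Quotient s) =
      (Finset.univ.filter fun f : β → Fin q => s ≤ Setoid.ker f).card := by
    rw [← Fintype.card_subtype, ← Nat.card_eq_fintype_card, card_le_ker, Nat.card_fin]
  rw [card_total, Finset.card_eq_sum_card_fiberwise (f := Setoid.ker) (t := Finset.Ici s)
    fun f hf => by simpa using hf]
  simpa only [Finset.filter_filter] using Finset.sum_congr rfl card_fiber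

variable {𝕜 : Type*} [CommRing 𝕜] [IsDomain 𝕜] [CharZero 𝕜]

lemma descPochhammer_eq_sum_Ici_mu (s : Setoid β) :
    descPochhammer 𝕜 (Nat.card (Quotient s)) =
      ∑ t ∈ Finset.Ici s, C (mu 𝕜 s t) * X ^ Nat.card (Quotient t) := by
  refine eq_of_infinite_eval_eq _ _ <|
    (Set.infinite_range_of_injective (Nat.cast_injective (R := 𝕜))).mono ?_
  rintro _ ⟨q, rfl⟩
  have inversion := IncidenceAlgebra.moebius_inversion_top (𝕜 := 𝕜)
    (fun t : Setoid β => (q.descFactorial (Nat.card (Quotient t)) : 𝕜))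
    (fun t => (q : 𝕜) ^ Nat.card (Quotient t))
    (fun t => by exact_mod_cast (sum_Ici_descFactorial_card_quotient t q).symm) s
  simpa [eval_finsetSum, descPochhammer_eval_eq_descFactorial] using inversion

lemma mu_setoid_top [Nonempty β] (s : Setoid β) :
    mu 𝕜 s ⊤ = (-1) ^ (Nat.card (Quotient s) - 1) * ((Nat.card (Quotient s) - 1)! : 𝕜) := by
  have card_eq_one (t : Setoid β) : 1 = Nat.card (Quotient t) ↔ t = ⊤ := by
    rw [eq_comm, Nat.card_eq_one_iff_unique, Quotient.subsingleton_iff]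
    exact and_iff_left ((nonempty_quotient_iff t).2 inferInstance)
  have := (nonempty_quotient_iff s).2 inferInstance
  have card_pos : 0 < Nat.card (Quotient s) := Nat.card_pos
  calc mu 𝕜 s ⊤
      = (∑ t ∈ Finset.Ici s, C (mu 𝕜 s t) * X ^ Nat.card (Quotient t)).coeff 1 := by
        simp [finsetSum_coeff, coeff_C_mul, coeff_X_pow, card_eq_one]
    _ = (descPochhammer 𝕜 (Nat.card (Quotient s) - 1 + 1)).coeff 1 := by
        rw [← descPochhammer_eq_sum_Ici_mu, Nat.sub_add_cancel card_pos]
    _ = _ := coeff_one_descPochhammer_succ 𝕜 _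

end PartitionLattice

namespace LPart

variable {α : Type*} {p q s t : LPart α}

instance : OrderTop (LPart α) where
  top := ⟨⊤, Set.univ, fun _ _ _ => Iff.rfl⟩
  le_top _ := ⟨le_top, Set.subset_univ _⟩

instance [Finite α] : LocallyFiniteOrder (LPart α) := Fintype.toLocallyFiniteOrder

lemma le_piStar (p : LPart α) : p ≤ p.piStar := ⟨fun _ _ => Or.inl, subset_rfl⟩

lemma piStar_le_piStar_of_le_piStar (h : p ≤ q.piStar) : p.piStar ≤ q.piStar := by
  refine ⟨fun x y hxy => ?_, h.2⟩
  rcases hxy with hxy | ⟨hx, hy⟩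
  · exact h.1 hxy
  · exact Or.inr ⟨h.2 hx, h.2 hy⟩

lemma piStar_eq_of_mem_Icc (h : t ∈ Set.Icc p p.piStar) : t.piStar = p.piStar :=
  (piStar_le_piStar_of_le_piStar h.2).antisymm
    (piStar_le_piStar_of_le_piStar (h.1.trans t.le_piStar))

lemma eq_piStar_iff : p = p.piStar ↔ ∀ x ∈ p.lab, ∀ y ∈ p.lab, p.rel x y := by
  constructor
  · intro h x hx y hy
    rw [h]
    exact Or.inr ⟨hx, hy⟩
  · refine fun h => p.le_piStar.antisymm ⟨fun x y hxy => ?_, subset_rfl⟩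
    rcases hxy with hxy | ⟨hx, hy⟩
    · exact hxy
    · exact h x hx y hy

lemma m_eq_ite (hs : s.lab.Nonempty) : s.m = if s = s.piStar then 1 else 0 := by
  simp only [m, OneLab, hs, true_and, eq_piStar_iff]

section MobiusPiStar

/-- The partition of the labelled points of `p` into the labelled blocks of `p`, encoded as an
equivalence relation on the subtype `p.lab`. -/
def labRel (p : LPart α) : Setoid p.lab := p.rel.comap (↑)

/-- The labelled set partition obtained from `p` by merging labelled blocks of `p` according to
the coarsening `r` of `p.labRel`. -/
def mergeLab (p : LPart α) (r : Set.Ici p.labRel) : LPart α where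
  rel :=
    { r x y := p.rel x y ∨ ∃ (hx : x ∈ p.lab) (hy : y ∈ p.lab), r.1 ⟨x, hx⟩ ⟨y, hy⟩
      iseqv.refl x := Or.inl (p.rel.refl x)
      iseqv.symm := by
        rintro x y (h | ⟨hx, hy, h⟩)
        · exact Or.inl (p.rel.symm h)
        · exact Or.inr ⟨hy, hx, r.1.symm h⟩
      iseqv.trans := by
        have of_rel {x y : α} (hx : x ∈ p.lab) (hy : y ∈ p.lab) (h : p.rel x y) :
            r.1 ⟨x, hx⟩ ⟨y, hy⟩ := r.2 h
        rintro x y z (hxy | ⟨hx, hy, hxy⟩) (hyz | ⟨hy', hz, hyz⟩)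
        · exact Or.inl (p.rel.trans hxy hyz)
        · have hx := (p.lab_mem hxy).2 hy'
          exact Or.inr ⟨hx, hz, r.1.trans (of_rel hx hy' hxy) hyz⟩
        · have hz := (p.lab_mem hyz).1 hy
          exact Or.inr ⟨hx, hz, r.1.trans hxy (of_rel hy hz hyz)⟩
        · exact Or.inr ⟨hx, hz, r.1.trans hxy hyz⟩ }
  lab := p.lab
  lab_mem := by
    rintro x y (h | ⟨hx, hy, -⟩)
    · exact p.lab_mem h
    · exact iff_of_true hx hy

lemma le_mergeLab (p : LPart α) (r : Set.Ici p.labRel) : p ≤ p.mergeLab r :=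
  ⟨fun _ _ => Or.inl, subset_rfl⟩

lemma mergeLab_rel_coe (p : LPart α) (r : Set.Ici p.labRel) (x y : p.lab) :
    (p.mergeLab r).rel x y ↔ r.1 x y := by
  constructor
  · rintro (h | ⟨_, _, h⟩)
    · exact r.2 h
    · exact h
  · exact fun h => Or.inr ⟨x.2, y.2, h⟩

/-- `mergeLab` as an order embedding, identifying the partition lattice of the labelled blocks of
`p` with the interval `[p, p.piStar]`. -/
def mergeLabEmbedding (p : LPart α) : Set.Ici p.labRel ↪o LPart α :=
  OrderEmbedding.ofMapLEIff p.mergeLab fun r r' => by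
    constructor
    · intro h x y hxy
      exact (p.mergeLab_rel_coe r' x y).1 (h.1 ((p.mergeLab_rel_coe r x y).2 hxy))
    · refine fun h => ⟨fun x y hxy => ?_, subset_rfl⟩
      rcases hxy with hxy | ⟨hx, hy, hxy⟩
      · exact Or.inl hxy
      · exact Or.inr ⟨hx, hy, h hxy⟩

lemma mergeLabEmbedding_bot (p : LPart α) : p.mergeLabEmbedding ⊥ = p := by
  refine LPart.ext (Setoid.ext fun x y => or_iff_left_of_imp ?_) rfl
  exact fun ⟨_, _, hxy⟩ => hxy

lemma mergeLabEmbedding_top (p : LPart α) : p.mergeLabEmbedding ⊤ = p.piStar := by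
  refine LPart.ext (Setoid.ext fun x y => or_congr Iff.rfl ?_) rfl
  exact ⟨fun ⟨hx, hy, _⟩ => ⟨hx, hy⟩, fun ⟨hx, hy⟩ => ⟨hx, hy, trivial⟩⟩

lemma range_mergeLabEmbedding (p : LPart α) :
    Set.range p.mergeLabEmbedding = Set.Icc p p.piStar := by
  ext t
  constructor
  · rintro ⟨r, rfl⟩
    rw [← mergeLabEmbedding_top]
    exact ⟨p.le_mergeLab r, p.mergeLabEmbedding.monotone le_top⟩
  · rintro ⟨hpt, htp⟩
    refine ⟨⟨t.rel.comap (↑), fun _ _ h => hpt.1 h⟩,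
      LPart.ext (Setoid.ext fun x y => ?_) (hpt.2.antisymm htp.2)⟩
    constructor
    · rintro (hxy | ⟨_, _, hxy⟩)
      · exact hpt.1 hxy
      · exact hxy
    · intro hxy
      exact (htp.1 hxy).imp_right fun ⟨hx, hy⟩ => ⟨hx, hy, hxy⟩

/-- The number of labelled blocks of `p`. -/
def numLab (p : LPart α) : ℕ := Nat.card (Quotient p.labRel)

lemma mobius_piStar [Finite α] (hp : p.lab.Nonempty) :
    mobius p p.piStar = (-1) ^ (p.numLab - 1) * ((p.numLab - 1)! : ℝ) := by
  have := hp.to_subtype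
  have := Fintype.ofFinite (Setoid p.lab)
  let _ : LocallyFiniteOrder (Setoid p.lab) := Fintype.toLocallyFiniteOrder
  have ordConnected_mergeLab : (Set.range p.mergeLabEmbedding).OrdConnected :=
    p.range_mergeLabEmbedding ▸ Set.ordConnected_Icc
  have ordConnected_coe :
      (Set.range (OrderEmbedding.subtype (· ∈ Set.Ici p.labRel))).OrdConnected := by
    exact Subtype.range_coe ▸ Set.ordConnected_Ici
  calc mobius p p.piStar
      = mu ℝ (p.mergeLabEmbedding ⊥) (p.mergeLabEmbedding ⊤) := by
        rw [mergeLabEmbedding_bot, mergeLabEmbedding_top, mobius_eq_mu]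
    _ = mu ℝ (⊥ : Set.Ici p.labRel) ⊤ := mu_orderEmbedding ℝ _ ordConnected_mergeLab _ _
    _ = mu ℝ p.labRel ⊤ := (mu_orderEmbedding ℝ _ ordConnected_coe _ _).symm
    _ = _ := mu_setoid_top p.labRel

end MobiusPiStar

section Inversion

/-- The labelled set partition arising from `p` by merging all unlabelled blocks of `p` into a
single unlabelled block; the counterpart of `piStar` for the unlabelled blocks. -/
def mergeUnlab (p : LPart α) : LPart α where
  rel :=
    { r x y := p.rel x y ∨ x ∉ p.lab ∧ y ∉ p.lab
      iseqv.refl x := Or.inl (p.rel.refl x)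
      iseqv.symm := by
        rintro x y (h | ⟨hx, hy⟩)
        · exact Or.inl (p.rel.symm h)
        · exact Or.inr ⟨hy, hx⟩
      iseqv.trans := by
        rintro x y z (hxy | ⟨hx, hy⟩) (hyz | ⟨hy', hz⟩)
        · exact Or.inl (p.rel.trans hxy hyz)
        · exact Or.inr ⟨(p.lab_mem hxy).not.2 hy', hz⟩
        · exact Or.inr ⟨hx, (p.lab_mem hyz).not.1 hy⟩
        · exact Or.inr ⟨hx, hz⟩ }
  lab := p.lab
  lab_mem := by
    rintro x y (h | ⟨hx, hy⟩)
    · exact p.lab_mem h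
    · exact iff_of_false hx hy

lemma mergeUnlab_eq_piStar_iff : p.mergeUnlab = p.mergeUnlab.piStar ↔ p = p.piStar := by
  simp only [eq_piStar_iff]
  refine forall₄_congr fun x hx y _ => ⟨fun h => ?_, Or.inl⟩
  exact h.resolve_right fun h => h.1 hx

lemma mem_Icc_mergeUnlab_iff :
    t ∈ Set.Icc p.mergeUnlab p.mergeUnlab.piStar ↔
      p ≤ t ∧ t.AtMostOneUnlab ∧ t.lab = p.lab := by
  constructor
  · rintro ⟨hpt, htp⟩
    have hlab : t.lab = p.lab := htp.2.antisymm hpt.2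
    refine ⟨⟨fun x y h => hpt.1 (Or.inl h), hpt.2⟩, fun x y hx hy => ?_, hlab⟩
    exact hpt.1 (Or.inr ⟨hlab ▸ hx, hlab ▸ hy⟩)
  · rintro ⟨hpt, ht, hlab⟩
    refine ⟨⟨fun x y hxy => ?_, hpt.2⟩, ⟨fun x y hxy => ?_, hlab.le⟩⟩
    · rcases hxy with hxy | ⟨hx, hy⟩
      · exact hpt.1 hxy
      · exact ht x y (hlab ▸ hx) (hlab ▸ hy)
    · have hxy_lab : x ∈ p.lab ↔ y ∈ p.lab := hlab ▸ t.lab_mem hxy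
      by_cases hx : x ∈ p.lab
      · exact Or.inr ⟨hx, hxy_lab.1 hx⟩
      · exact Or.inl (Or.inr ⟨hx, hxy_lab.not.1 hx⟩)

variable [Finite α]

lemma sum_mu_piStar_lab_eq (p : LPart α) :
    ∑ t ∈ Finset.Ici p with t.AtMostOneUnlab ∧ t.lab = p.lab, mu ℝ t t.piStar =
      if p = p.piStar then 1 else 0 := by
  have filter_eq_Icc : (Finset.Ici p).filter (fun t => t.AtMostOneUnlab ∧ t.lab = p.lab) =
      Finset.Icc p.mergeUnlab p.mergeUnlab.piStar := by
    ext t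
    rw [Finset.mem_filter, Finset.mem_Ici, ← mem_Icc_mergeUnlab_iff, Set.mem_Icc, Finset.mem_Icc]
  have piStar_eq : ∀ t ∈ Finset.Icc p.mergeUnlab p.mergeUnlab.piStar,
      mu ℝ t t.piStar = mu ℝ t p.mergeUnlab.piStar := fun t ht => by
    rw [piStar_eq_of_mem_Icc (Finset.mem_Icc.1 ht)]
  rw [filter_eq_Icc, Finset.sum_congr rfl piStar_eq, IncidenceAlgebra.sum_Icc_mu_left]
  simp only [mergeUnlab_eq_piStar_iff]

lemma sum_mu_piStar_lab_eq_of_ne (hs : s.lab.Nonempty) (hst : s ≤ t) (hlab : t.lab ≠ s.lab) :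
    ∑ u ∈ Finset.Ici s with u.AtMostOneUnlab ∧ u.lab = t.lab, mu ℝ u u.piStar = 0 := by
  let s' : LPart α := ⟨s.rel, t.lab, fun _ _ h => t.lab_mem (hst.1 h)⟩
  have hs' : s' ≠ s'.piStar := by
    intro h
    obtain ⟨x, hx⟩ := hs
    refine hlab (Set.Subset.antisymm (fun y hy => ?_) hst.2)
    exact (s.lab_mem (eq_piStar_iff.1 h x (hst.2 hx) y hy)).1 hx
  rw [← (sum_mu_piStar_lab_eq s').trans (if_neg hs')]
  refine Finset.sum_congr (Finset.ext fun u => ?_) fun _ _ => rfl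
  simp only [Finset.mem_filter, Finset.mem_Ici]
  refine and_congr_left fun hu => ?_
  exact ⟨fun h => ⟨h.1, hu.2.ge⟩, fun h => ⟨h.1, hst.2.trans h.2⟩⟩

lemma sum_mu_piStar (hs : s.lab.Nonempty) :
    ∑ t ∈ Finset.Ici s with t.AtMostOneUnlab, mu ℝ t t.piStar = s.m := by
  rw [← Finset.sum_fiberwise_of_maps_to (t := (Finset.Ici s).image lab) (g := lab)
    fun t ht => Finset.mem_image_of_mem _ (Finset.mem_of_mem_filter t ht)]
  simp only [Finset.filter_filter]
  rw [Finset.sum_eq_single s.lab, sum_mu_piStar_lab_eq, m_eq_ite hs]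
  · intro A hA hne
    obtain ⟨t, hst, rfl⟩ := Finset.mem_image.1 hA
    exact sum_mu_piStar_lab_eq_of_ne hs (Finset.mem_Ici.1 hst) hne
  · exact fun h => absurd (Finset.mem_image_of_mem _ (Finset.mem_Ici.2 le_rfl)) h

end Inversion

end LPart

section Lamda

variable {α : Type*} [Finite α] {K : Set α}

lemma lamda_eq_sum_Ici (π : LStates α K) :
    lamda K π.1 = ∑ σ ∈ Finset.Ici π.1, mu ℝ π.1 σ * σ.m := by
  have mem_states {σ : LPart α} (h : σ ∈ Finset.Ici π.1) :
      LPart.piX K ≤ σ ∧ σ.lab.Nonempty := by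
    rw [Finset.mem_Ici] at h
    exact ⟨π.2.1.trans h, π.2.2.mono h.2⟩
  unfold lamda
  rw [← Finset.sum_filter]
  refine Finset.sum_bij (fun σ _ => σ.1) ?_ ?_ ?_ ?_
  · simp
  · exact fun _ _ _ _ => Subtype.ext
  · exact fun σ hσ => ⟨⟨σ, mem_states hσ⟩, by simpa [← Subtype.coe_le_coe] using hσ, rfl⟩
  · exact fun σ _ => by rw [mobius_eq_mu]

lemma lamda_eq_ite (π : LStates α K) :
    lamda K π.1 = if π.1.AtMostOneUnlab then mobius π.1 π.1.piStar else 0 := by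
  have m_eq_sum : ∀ σ ∈ Finset.Ici π.1,
      σ.m = ∑ t ∈ Finset.Ici σ, if t.AtMostOneUnlab then mu ℝ t t.piStar else 0 := by
    intro σ hσ
    rw [← Finset.sum_filter, LPart.sum_mu_piStar (π.2.2.mono (Finset.mem_Ici.1 hσ).2)]
  rw [lamda_eq_sum_Ici, mobius_eq_mu]
  calc ∑ σ ∈ Finset.Ici π.1, mu ℝ π.1 σ * σ.m
      = ∑ σ ∈ Finset.Ici π.1, mu ℝ π.1 σ *
          ∑ t ∈ Finset.Ici σ, if t.AtMostOneUnlab then mu ℝ t t.piStar else 0 :=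
        Finset.sum_congr rfl fun σ hσ => by rw [← m_eq_sum σ hσ]
    _ = _ := (IncidenceAlgebra.moebius_inversion_top
        (fun t : LPart α => if t.AtMostOneUnlab then mu ℝ t t.piStar else 0) _
        (fun _ => rfl) π.1).symm

end Lamda

/-- The set `Π_l(X,π_X)₀ = {π ∈ Π_l(X,π_X) : λ(π) ≠ 0}` consists exactly of the
labelled set partitions in `Π_l(X,π_X)` with at most one unlabelled block, and on it
`λ(π) = μ_{Π_l(X)}(π, π*)`. -/
theorem lamda_ne_zero_iff_and_eq_mobius_piStar {α : Type*} [Fintype α] (K : Set α) :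
    (∀ π : LStates α K, lamda K π.1 ≠ 0 ↔ π.1.AtMostOneUnlab) ∧
      ∀ π : LStates α K, lamda K π.1 ≠ 0 → lamda K π.1 = mobius π.1 π.1.piStar := by
  have ne_zero_iff (π : LStates α K) : lamda K π.1 ≠ 0 ↔ π.1.AtMostOneUnlab := by
    rw [lamda_eq_ite, ite_ne_right_iff, LPart.mobius_piStar π.2.2]
    exact and_iff_left (by positivity)
  refine ⟨ne_zero_iff, fun π hπ => ?_⟩
  rw [lamda_eq_ite, if_pos ((ne_zero_iff π).1 hπ)]

end
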